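/- arXiv:2110.09824 — 3 statements merged into one kernel-verified Lean document; each statement's English description precedes it below -/
import Mathlib

section
/- The sequence of positive integers ν_{r,s} defined by the recursions in the context satisfies ν_{r,s} ≤ ν_{s,s} ≤ 2^{8s} for all integers r ≥ 0 and s ≥ 0. -/
/-!
For a fixed `r`, each of the three recursions divides the generating function `∑ s, f s * t ^ s`
by `1 - b t ^ r`, where `b` is the `r`-th coefficient just before the division. With
`a r = ν_{r-1,r}` the three values of `b` are `a r`, `2 a r`, `4 a r`, so that
`ν_{r,r} = 8 a r` and
`∑ s, ν_{n,s} t ^ s = (1 - t)⁻¹ ∏_{r ≤ n} ((1 - a_r t^r)(1 - 2 a_r t^r)(1 - 4 a_r t^r))⁻¹`.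
Step `r` changes no coefficient of index `s < r` and decreases none, whence `ν_{r,s} ≤ ν_{s,s}`.

For the upper bound take `t = 1 / 256` and `S n = ∑_{r ≤ n} a_r t^r`. Since
`∏ (1 - y_i) ≥ 1 - ∑ y_i`, every partial sum of the series above is at most
`1 / ((1 - t)(1 - 7 S n))`. On the other hand, the partial sum up to `s = n + 1` equals
`1 + 8 S n + a_{n+1} t^{n+1} = 1 + 7 S n + S (n + 1)`. Comparing the two, `S n ≤ 1 / 128` forces
`S (n + 1) ≤ 1 / 128`, because `(255 / 256) (121 / 128) (17 / 16) > 1`. By induction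
`a_s t^s ≤ 1 / 128` for all `s`, so `ν_{s,s} = 8 a_s ≤ 256 ^ s`. Only finite partial sums are used.
-/

/-- The coefficients of the generating function of `f` divided by `1 - b t ^ r`. -/
def geomStep (r b : ℕ) (f : ℕ → ℕ) (s : ℕ) : ℕ :=
  ∑ j ∈ Finset.range (s / r + 1), b ^ j * f (s - j * r)

lemma geomStep_of_lt {r s : ℕ} (b : ℕ) (f : ℕ → ℕ) (h : s < r) : geomStep r b f s = f s := by
  simp [geomStep, Nat.div_eq_of_lt h]

lemma geomStep_add {r : ℕ} (hr : 1 ≤ r) (b : ℕ) (f : ℕ → ℕ) (s : ℕ) :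
    geomStep r b f (s + r) = f (s + r) + b * geomStep r b f s := by
  unfold geomStep
  rw [Nat.add_div_right s hr, Finset.sum_range_succ', Finset.mul_sum, add_comm]
  congr 1
  · simp
  · refine Finset.sum_congr rfl fun j _ => ?_
    have : s + r - (j + 1) * r = s - j * r := by
      rw [add_mul, one_mul, Nat.add_sub_add_right]
    rw [this, pow_succ]
    ring

lemma geomStep_self {r : ℕ} (hr : 1 ≤ r) (b : ℕ) (f : ℕ → ℕ) :
    geomStep r b f r = f r + b * f 0 := by
  have h := geomStep_add hr b f 0
  rwa [zero_add, geomStep_of_lt b f hr] at h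

lemma le_geomStep (r b : ℕ) (f : ℕ → ℕ) (s : ℕ) : f s ≤ geomStep r b f s := by
  unfold geomStep
  rw [Finset.sum_range_succ']
  simp

/-- The partial sum of the first `N` terms of the generating function of `f` at `t = 1 / 256`. -/
noncomputable def partialGen (f : ℕ → ℕ) (N : ℕ) : ℝ :=
  ∑ s ∈ Finset.range N, (f s : ℝ) * (1 / 256) ^ s

lemma partialGen_nonneg (f : ℕ → ℕ) (N : ℕ) : 0 ≤ partialGen f N :=
  Finset.sum_nonneg fun _ _ => by positivity

/-- Truncated form of `G * (1 - b t ^ r) = F`; the truncation only loses nonnegative terms. -/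
lemma partialGen_geomStep {r : ℕ} (hr : 1 ≤ r) (b : ℕ) (f : ℕ → ℕ) (N : ℕ) :
    (1 - b * (1 / 256 : ℝ) ^ r) * partialGen (geomStep r b f) N ≤ partialGen f N := by
  have hstep : ∀ N, partialGen (geomStep r b f) (N + r) =
      partialGen f (N + r) + b * (1 / 256 : ℝ) ^ r * partialGen (geomStep r b f) N := by
    intro N
    induction N with
    | zero =>
      simp only [partialGen, zero_add, Finset.sum_range_zero, mul_zero, add_zero]
      refine Finset.sum_congr rfl fun s hs => ?_
      rw [geomStep_of_lt b f (Finset.mem_range.1 hs)]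
    | succ N ih =>
      have hsucc : ∀ (g : ℕ → ℕ) (M : ℕ),
          partialGen g (M + 1) = partialGen g M + (g M : ℝ) * (1 / 256) ^ M :=
        fun g M => Finset.sum_range_succ _ _
      rw [show N + 1 + r = N + r + 1 by ring, hsucc, hsucc, hsucc, ih, geomStep_add hr]
      push_cast
      rw [pow_add]
      ring
  rcases Nat.lt_or_ge N r with h | h
  · have heq : partialGen (geomStep r b f) N = partialGen f N := by
      refine Finset.sum_congr rfl fun s hs => ?_
      rw [geomStep_of_lt b f ((Finset.mem_range.1 hs).trans h)]
    have h1 : 0 ≤ (b : ℝ) * (1 / 256 : ℝ) ^ r * partialGen f N :=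
      mul_nonneg (by positivity) (partialGen_nonneg f N)
    rw [heq]
    linarith
  · obtain ⟨M, rfl⟩ := Nat.exists_eq_add_of_le' h
    have hmono : partialGen (geomStep r b f) M ≤ partialGen (geomStep r b f) (M + r) :=
      Finset.sum_le_sum_of_subset_of_nonneg
        (Finset.range_subset_range.2 (by omega)) fun _ _ _ => by positivity
    have h1 := mul_le_mul_of_nonneg_left hmono
      (show 0 ≤ (b : ℝ) * (1 / 256 : ℝ) ^ r by positivity)
    have h2 := hstep M
    linarith

lemma partialGen_one (N : ℕ) : (1 - 1 / 256 : ℝ) * partialGen (fun _ => 1) N ≤ 1 := by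
  have h := mul_neg_geom_sum (1 / 256 : ℝ) N
  have hp : (0 : ℝ) ≤ (1 / 256) ^ N := by positivity
  simp only [partialGen, Nat.cast_one, one_mul]
  linarith

/-- The sequence obtained from `f` by the three divisions of index `r`, given that `f 0 = 1` and
`f r = a`, so that the successive coefficients of index `r` are `a`, `2 a` and `4 a`. -/
def tripleStep (r a : ℕ) (f : ℕ → ℕ) : ℕ → ℕ :=
  geomStep r (4 * a) (geomStep r (2 * a) (geomStep r a f))

/-- Truncated form of dividing by `(1 - x) (1 - 2 x) (1 - 4 x)`, where `x = a t ^ r`, with the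
product replaced by its lower bound `1 - 7 x`, in the presence of a factor `1 - 7 S`. -/
lemma partialGen_tripleStep {r : ℕ} (hr : 1 ≤ r) (a : ℕ) (f : ℕ → ℕ) (N : ℕ) {S : ℝ} (hS : 0 ≤ S)
    (hSx : S + a * (1 / 256 : ℝ) ^ r ≤ 1 / 128) :
    (1 - 7 * (S + a * (1 / 256 : ℝ) ^ r)) * partialGen (tripleStep r a f) N ≤
      (1 - 7 * S) * partialGen f N := by
  have h1 := partialGen_geomStep hr a f N
  have h2 := partialGen_geomStep hr (2 * a) (geomStep r a f) N
  have h3 := partialGen_geomStep hr (4 * a) (geomStep r (2 * a) (geomStep r a f)) N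
  have hT := partialGen_nonneg (tripleStep r a f) N
  unfold tripleStep at hT ⊢
  push_cast at h2 h3
  rw [mul_assoc] at h2 h3
  have hx : 0 ≤ a * (1 / 256 : ℝ) ^ r := by positivity
  generalize a * (1 / 256 : ℝ) ^ r = x at *
  generalize partialGen (geomStep r (4 * a) (geomStep r (2 * a) (geomStep r a f))) N = T3 at *
  generalize partialGen (geomStep r (2 * a) (geomStep r a f)) N = T2 at *
  generalize partialGen (geomStep r a f) N = T1 at *
  generalize partialGen f N = T0 at *
  have hprod : (1 - x) * ((1 - 2 * x) * ((1 - 4 * x) * T3)) ≤ T0 :=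
    calc (1 - x) * ((1 - 2 * x) * ((1 - 4 * x) * T3))
        ≤ (1 - x) * ((1 - 2 * x) * T2) :=
          mul_le_mul_of_nonneg_left
            (mul_le_mul_of_nonneg_left h3 (by linarith)) (by linarith)
      _ ≤ (1 - x) * T1 := mul_le_mul_of_nonneg_left h2 (by linarith)
      _ ≤ T0 := h1
  have hcub : 1 - 7 * x ≤ (1 - x) * (1 - 2 * x) * (1 - 4 * x) := by
    have : 0 ≤ x ^ 2 * (14 - 8 * x) := mul_nonneg (sq_nonneg x) (by linarith)
    nlinarith
  have hSx7 : 1 - 7 * (S + x) ≤ (1 - 7 * S) * (1 - 7 * x) := by nlinarith [mul_nonneg hS hx]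
  calc (1 - 7 * (S + x)) * T3
      ≤ ((1 - 7 * S) * ((1 - x) * (1 - 2 * x) * (1 - 4 * x))) * T3 :=
        mul_le_mul_of_nonneg_right
          (hSx7.trans (mul_le_mul_of_nonneg_left hcub (by linarith))) hT
    _ = (1 - 7 * S) * ((1 - x) * ((1 - 2 * x) * ((1 - 4 * x) * T3))) := by ring
    _ ≤ (1 - 7 * S) * T0 := mul_le_mul_of_nonneg_left hprod (by linarith)


/-- The sequence of positive integers `ν_{r,s}` defined by the recursions
`ν_{0,s} = 1`, `ν^{(I)}_{r,s} = Σ_{j=0}^{⌊s/r⌋} (ν_{r−1,r})^j ν_{r−1,s−jr}`,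
`ν^{(II)}_{r,s} = Σ_{j=0}^{⌊s/r⌋} (ν^{(I)}_{r,r})^j ν^{(I)}_{r,s−jr}` and
`ν_{r,s} = Σ_{j=0}^{⌊s/r⌋} (ν^{(II)}_{r,r})^j ν^{(II)}_{r,s−jr}` satisfies
`ν_{r,s} ≤ ν_{s,s} ≤ 2^{8s}` for all `r, s ≥ 0`. -/
theorem stmt_3 (ν νI νII : ℕ → ℕ → ℕ)
    (h0 : ∀ s, ν 0 s = 1)
    (hI : ∀ r s, 1 ≤ r →
      νI r s = ∑ j ∈ Finset.range (s / r + 1), ν (r - 1) r ^ j * ν (r - 1) (s - j * r))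
    (hII : ∀ r s, 1 ≤ r →
      νII r s = ∑ j ∈ Finset.range (s / r + 1), νI r r ^ j * νI r (s - j * r))
    (hν : ∀ r s, 1 ≤ r →
      ν r s = ∑ j ∈ Finset.range (s / r + 1), νII r r ^ j * νII r (s - j * r)) :
    ∀ r s : ℕ, ν r s ≤ ν s s ∧ ν s s ≤ 2 ^ (8 * s) := by
  have pos : ∀ r : ℕ, 0 < r + 1 := Nat.succ_pos
  have sI : ∀ r, νI (r + 1) = geomStep (r + 1) (ν r (r + 1)) (ν r) :=
    fun r => funext fun s => hI (r + 1) s (pos r)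
  have sII : ∀ r, νII (r + 1) = geomStep (r + 1) (νI (r + 1) (r + 1)) (νI (r + 1)) :=
    fun r => funext fun s => hII (r + 1) s (pos r)
  have sν : ∀ r, ν (r + 1) = geomStep (r + 1) (νII (r + 1) (r + 1)) (νII (r + 1)) :=
    fun r => funext fun s => hν (r + 1) s (pos r)
  have stable : ∀ r s, s < r + 1 → ν (r + 1) s = ν r s := by
    intro r s h
    rw [sν, geomStep_of_lt _ _ h, sII, geomStep_of_lt _ _ h, sI, geomStep_of_lt _ _ h]
  have mono : ∀ s, Monotone fun r => ν r s := by
    refine fun s => monotone_nat_of_le_succ fun r => ?_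
    show ν r s ≤ ν (r + 1) s
    have e1 := le_geomStep (r + 1) (ν r (r + 1)) (ν r) s
    have e2 := le_geomStep (r + 1) (νI (r + 1) (r + 1)) (νI (r + 1)) s
    have e3 := le_geomStep (r + 1) (νII (r + 1) (r + 1)) (νII (r + 1)) s
    rw [← sν] at e3
    rw [← sII] at e2
    rw [← sI] at e1
    exact e1.trans (e2.trans e3)
  have const : ∀ s k, ν (s + k) s = ν s s := by
    intro s k
    induction k with
    | zero => rfl
    | succ k ih => rw [← ih, ← add_assoc, stable _ _ (by omega)]
  have zero : ∀ r, ν r 0 = 1 := fun r => by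
    have h := const 0 r
    rwa [zero_add, h0] at h
  have le_diag : ∀ r s, ν r s ≤ ν s s := by
    intro r s
    rcases le_total r s with h | h
    · exact mono s h
    · obtain ⟨k, rfl⟩ := Nat.exists_eq_add_of_le h
      exact (const s k).le
  have triple : ∀ r, ν (r + 1) = tripleStep (r + 1) (ν r (r + 1)) (ν r) := by
    intro r
    have v1 : νI (r + 1) (r + 1) = 2 * ν r (r + 1) := by
      rw [sI, geomStep_self (pos r), zero]; ring
    have z1 : νI (r + 1) 0 = 1 := by rw [sI, geomStep_of_lt _ _ (pos r), zero]
    have v2 : νII (r + 1) (r + 1) = 4 * ν r (r + 1) := by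
      rw [sII, geomStep_self (pos r), z1, v1]; ring
    rw [tripleStep, ← sI, ← v1, ← sII, ← v2, ← sν]
  have diag : ∀ r, ν (r + 1) (r + 1) = 8 * ν r (r + 1) := by
    intro r
    rw [triple, tripleStep, geomStep_self (pos r), geomStep_self (pos r),
      geomStep_self (pos r)]
    simp only [geomStep_of_lt _ _ (pos r), zero]
    ring
  -- `S n` is the sum of `a_r t ^ r` over `1 ≤ r ≤ n`, with `a_r = ν_{r-1,r}` and the index shifted.
  set S : ℕ → ℝ := fun n => ∑ r ∈ Finset.range n, (ν r (r + 1) : ℝ) * (1 / 256) ^ (r + 1) with hS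
  have S_succ : ∀ n, S (n + 1) = S n + (ν n (n + 1) : ℝ) * (1 / 256) ^ (n + 1) :=
    fun n => Finset.sum_range_succ _ _
  have S_nonneg : ∀ n, 0 ≤ S n := fun n => Finset.sum_nonneg fun _ _ => by positivity
  have diag_sum : ∀ n, ∑ s ∈ Finset.range (n + 1), (ν s s : ℝ) * (1 / 256) ^ s = 1 + 8 * S n := by
    intro n
    rw [Finset.sum_range_succ', Finset.mul_sum, h0, add_comm]
    congr 1
    · simp
    · refine Finset.sum_congr rfl fun r _ => ?_
      rw [diag]
      push_cast
      ring
  have partial_eq : ∀ n, partialGen (ν n) (n + 2) = 1 + 7 * S n + S (n + 1) := by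
    intro n
    have e : ∑ s ∈ Finset.range (n + 1), (ν n s : ℝ) * (1 / 256) ^ s = 1 + 8 * S n := by
      rw [← diag_sum]
      refine Finset.sum_congr rfl fun s hs => ?_
      obtain ⟨k, rfl⟩ := Nat.exists_eq_add_of_le (Nat.lt_succ_iff.1 (Finset.mem_range.1 hs))
      rw [const]
    rw [partialGen, Finset.sum_range_succ, e, S_succ]
    ring
  have key : ∀ n, S n ≤ 1 / 128 ∧
      ∀ N, (1 - 1 / 256 : ℝ) * ((1 - 7 * S n) * partialGen (ν n) N) ≤ 1 := by
    intro n
    induction n with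
    | zero =>
      refine ⟨by simp [hS], fun N => ?_⟩
      have e : ν 0 = fun _ => 1 := funext h0
      simpa [hS, e] using partialGen_one N
    | succ n ih =>
      obtain ⟨hle, hgen⟩ := ih
      have hle' : S (n + 1) ≤ 1 / 128 := by
        have h := hgen (n + 2)
        rw [partial_eq] at h
        have hn := S_nonneg n
        by_contra! hc
        have h1 : (1 - 7 * S n) * (1 + 7 * S n + 1 / 128) ≤
            (1 - 7 * S n) * (1 + 7 * S n + S (n + 1)) :=
          mul_le_mul_of_nonneg_left (by linarith) (by linarith)
        nlinarith
      refine ⟨hle', fun N => ?_⟩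
      rw [S_succ] at hle' ⊢
      rw [triple n]
      exact (mul_le_mul_of_nonneg_left
        (partialGen_tripleStep (pos n) _ (ν n) N (S_nonneg n) hle') (by norm_num)).trans (hgen N)
  intro r s
  refine ⟨le_diag r s, ?_⟩
  cases s with
  | zero => simp [h0]
  | succ n =>
    have h1 := (key (n + 1)).1
    rw [S_succ] at h1
    have h2 : (ν n (n + 1) : ℝ) * (1 / 256) ^ (n + 1) ≤ 1 / 128 := by linarith [S_nonneg n]
    rw [one_div_pow, mul_one_div, div_le_iff₀ (by positivity)] at h2
    have hp : (0 : ℝ) < 256 ^ (n + 1) := by positivity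
    have h3 : ((8 * ν n (n + 1) : ℕ) : ℝ) ≤ ((256 ^ (n + 1) : ℕ) : ℝ) := by
      push_cast
      linarith
    rw [diag, pow_mul]
    exact_mod_cast h3
end

section
/- Let τ ≥ 0 be a real number, r ≥ 1 an integer, and let S be a finite multiset of positive integers such that for every k ∈ ℕ the number of elements s of S (with multiplicity) satisfying 2^k ≤ s < 2^{k+1} is at most 3⌊r/2^k⌋. Then Π_{s∈S} s^{4+τ} ≤ 2^{12r(4+τ)}. -/
/-!
Each `s` satisfies `s < 2 ^ (log₂ s + 1)`, so the product is at most `2 ^ ((4 + τ) * E)` with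
`E = ∑_{s ∈ S} (log₂ s + 1)`. Grouping `S` into dyadic blocks, `E` is the sum over `k` of `k + 1`
times the size of the `k`-th block, hence at most
`3 * ∑ k, (k + 1) * ⌊r / 2 ^ k⌋ ≤ 3 * r * ∑ k, (k + 1) / 2 ^ k ≤ 12 * r`.
-/

lemma prod_rpow_le_two_rpow_sum_log (a : ℝ) (ha : 0 ≤ a) (S : Multiset ℕ) :
    (S.map (fun s : ℕ => (s : ℝ) ^ a)).prod ≤
      (2 : ℝ) ^ (((S.map (fun s => Nat.log 2 s + 1)).sum : ℕ) * a) := by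
  induction S using Multiset.induction_on with
  | empty => simp
  | cons s S ih =>
    rw [Multiset.map_cons, Multiset.prod_cons, Multiset.map_cons, Multiset.sum_cons]
    rw [Nat.cast_add, add_mul, Real.rpow_add two_pos]
    refine mul_le_mul ?_ ih
      (Multiset.prod_nonneg (by simp only [Multiset.mem_map]; rintro _ ⟨x, -, rfl⟩; positivity))
      (by positivity)
    rw [Real.rpow_mul two_pos.le, Real.rpow_natCast]
    refine Real.rpow_le_rpow (by positivity) ?_ ha
    exact_mod_cast (Nat.lt_pow_succ_log_self one_lt_two s).le

/-- Double counting: the sum of `log₂ s + 1` over `S`, grouped by the value of `log₂ s`. -/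
lemma sum_log_eq_sum_blocks (N : ℕ) (S : Multiset ℕ) (hN : ∀ s ∈ S, Nat.log 2 s < N) :
    (S.map (fun s => Nat.log 2 s + 1)).sum =
      ∑ k ∈ Finset.range N, (k + 1) * (S.filter (fun s => Nat.log 2 s = k)).card := by
  induction S using Multiset.induction_on with
  | empty => simp
  | cons s S ih =>
    have hs := hN s (Multiset.mem_cons_self s S)
    simp only [Multiset.map_cons, Multiset.sum_cons, Multiset.filter_cons, Multiset.card_add,
      mul_add, Finset.sum_add_distrib]
    rw [ih fun t ht => hN t (Multiset.mem_cons_of_mem ht), add_left_inj]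
    rw [Finset.sum_eq_single (Nat.log 2 s)]
    · simp
    · intro k _ hk
      simp [hk.symm]
    · intro h
      exact absurd (Finset.mem_range.2 hs) h

lemma sum_succ_div_two_pow (N : ℕ) :
    ∑ k ∈ Finset.range N, ((k : ℝ) + 1) / 2 ^ k = 4 - 2 * (N + 2) / 2 ^ N := by
  induction N with
  | zero => norm_num
  | succ n ih =>
    rw [Finset.sum_range_succ, ih]
    push_cast
    field_simp
    ring

/-- Let `τ ≥ 0`, `r ≥ 1`, and let `S` be a finite multiset of positive
integers such that for every `k ∈ ℕ` the number of elements `s` of `S` (with multiplicity)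
satisfying `2^k ≤ s < 2^{k+1}` is at most `3⌊r/2^k⌋`.  Then `Π_{s∈S} s^{4+τ} ≤ 2^{12r(4+τ)}`. -/
theorem stmt_4 (τ : ℝ) (hτ : 0 ≤ τ) (r : ℕ) (hr : 1 ≤ r) (S : Multiset ℕ)
    (hpos : ∀ s ∈ S, 0 < s)
    (hcount : ∀ k : ℕ,
      (S.filter (fun s => 2 ^ k ≤ s ∧ s < 2 ^ (k + 1))).card ≤ 3 * (r / 2 ^ k)) :
    (S.map (fun s => (s : ℝ) ^ (4 + τ))).prod ≤ (2 : ℝ) ^ (12 * (r : ℝ) * (4 + τ)) := by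
  have ha : 0 ≤ 4 + τ := by linarith
  -- in the goal `S` is coerced to `Multiset ℝ` by a monadic lift, with the power mapped over that
  have hcast : (S.map (fun s => (s : ℝ) ^ (4 + τ))) = S.map (fun s : ℕ => (s : ℝ) ^ (4 + τ)) := by
    simp only [Multiset.bind_def, Multiset.pure_def, Multiset.bind_singleton, Multiset.map_map,
      Function.comp_def]
  rw [hcast]
  refine (prod_rpow_le_two_rpow_sum_log _ ha S).trans ?_
  refine Real.rpow_le_rpow_of_exponent_le one_le_two (mul_le_mul_of_nonneg_right ?_ ha)
  -- any strict upper bound for the logarithms will do; `S.sum + 1` is convenient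
  rw [sum_log_eq_sum_blocks (S.sum + 1) S fun s hs =>
    Nat.lt_succ_of_le ((Nat.log_le_self 2 s).trans (Multiset.le_sum_of_mem hs))]
  have hblock (k : ℕ) : ((S.filter (fun s => Nat.log 2 s = k)).card : ℝ) ≤ 3 * (r / 2 ^ k) := by
    have h : S.filter (fun s => Nat.log 2 s = k) =
        S.filter (fun s => 2 ^ k ≤ s ∧ s < 2 ^ (k + 1)) :=
      Multiset.filter_congr fun s hs =>
        Nat.log_eq_iff (Or.inr ⟨one_lt_two, (hpos s hs).ne'⟩)
    have h1 : ((S.filter (fun s => Nat.log 2 s = k)).card : ℝ) ≤ 3 * ((r / 2 ^ k : ℕ) : ℝ) := by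
      rw [h]
      exact_mod_cast hcount k
    have h2 : ((r / 2 ^ k : ℕ) : ℝ) ≤ r / 2 ^ k := by
      simpa using (Nat.cast_div_le (α := ℝ) (m := r) (n := 2 ^ k))
    linarith
  calc ((∑ k ∈ Finset.range (S.sum + 1),
        (k + 1) * (S.filter (fun s => Nat.log 2 s = k)).card : ℕ) : ℝ)
      ≤ ∑ k ∈ Finset.range (S.sum + 1), 3 * (r : ℝ) * (((k : ℝ) + 1) / 2 ^ k) := by
        push_cast
        refine Finset.sum_le_sum fun k _ => ?_
        refine (mul_le_mul_of_nonneg_left (hblock k) (by positivity)).trans_eq ?_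
        ring
    _ ≤ 3 * (r : ℝ) * 4 := by
        rw [← Finset.mul_sum, sum_succ_div_two_pow]
        refine mul_le_mul_of_nonneg_left (sub_le_self _ ?_) (by positivity)
        positivity
    _ = 12 * r := by ring
end

section
/- Let n₁ ≥ 1, n₂ ≥ 0, K ≥ 1 be integers, let τ > n₁ be a real number, and let γ, D, Θ₀ > 0. For r ≥ 1, set N_r = card{ k ∈ ℤ^{n₁} : rK < ‖k‖₁ ≤ (r+1)K } and c_{n₂} = (n₂+1)(2n₂+1). Then the series Σ_{r=1}^{∞} N_r · c_{n₂} · 8γD^{n₁−1}/( Θ₀ · ((r+1)K)^τ ) converges and is bounded above by γ · 2^{n₁+3} · c_{n₂} · D^{n₁−1}/( Θ₀ · K^{τ−n₁} ) · Σ_{r=2}^{∞} r^{−(τ−n₁+1)}, the latter series being convergent. -/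
/-!
The proof is a termwise comparison. The number of lattice points `k ∈ ℤⁿ` (`n ≥ 1`) on the sphere
`‖k‖₁ = m` is at most `2ⁿ mⁿ⁻¹` for `m ≥ 1` (`exists_cover_l1_sphere`), by induction on `n`:
splitting off the first coordinate `i ∈ [-m, m]`, the two extreme values `i = ±m` contribute one
point each, and each of the `2m - 1` remaining values contributes at most `2ⁿ mⁿ⁻¹` points, so that
the sphere in `ℤⁿ⁺¹` has at most `(2m - 1) 2ⁿ mⁿ⁻¹ + 2 ≤ 2ⁿ⁺¹ mⁿ` points. Summing over the `K`
spheres `rK < m ≤ (r+1)K` gives `N_r ≤ 2ⁿ Kⁿ (r+1)ⁿ⁻¹` (`card_l1_shell_le`), which turns the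
`r`-th term of the series into a constant times `(r+1)^{-(τ-n+1)}`; the exponent `τ - n + 1`
exceeds `1`, so the comparison series converges.
-/

/-- Covering form of the bound on the `ℓ₁`-sphere of radius `m` in `ℤⁿ⁺¹`. The radius `m = 0` has
to be carried along separately, as the sphere is then a point while `2ⁿ⁺¹ mⁿ` vanishes for
`n ≥ 1`. -/
theorem exists_cover_l1_sphere (n m : ℕ) : ∃ S : Finset (Fin (n + 1) → ℤ),
    (∀ k : Fin (n + 1) → ℤ, (∑ j, (k j).natAbs) = m → k ∈ S) ∧
    (m = 0 → S.card ≤ 1) ∧ (1 ≤ m → S.card ≤ 2 ^ (n + 1) * m ^ n) := by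
  classical
  induction n generalizing m with
  | zero =>
    refine ⟨{fun _ => (m : ℤ), fun _ => -(m : ℤ)}, ?_, ?_, ?_⟩
    · intro k hk
      simp only [Nat.reduceAdd, Finset.univ_unique, Fin.default_eq_zero, Finset.sum_singleton] at hk
      have : k 0 = m ∨ k 0 = -(m : ℤ) := by omega
      simp only [Finset.mem_insert, Finset.mem_singleton]
      refine this.imp ?_ ?_ <;>
      · intro h
        funext j
        rw [Fin.fin_one_eq_zero j, h]
    · rintro rfl
      simp
    · intro _
      simpa using Finset.card_le_two
  | succ n ih =>
    rcases Nat.eq_zero_or_pos m with rfl | hm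
    · refine ⟨{0}, ?_, by simp, by omega⟩
      intro k hk
      simp only [Finset.sum_eq_zero_iff, Finset.mem_univ, true_imp_iff, Int.natAbs_eq_zero] at hk
      exact Finset.mem_singleton.2 (funext hk)
    · choose S hS h0 h1 using ih
      let F : ℤ → Finset (Fin (n + 2) → ℤ) := fun i =>
        (S (m - i.natAbs)).image (fun v => (Fin.cons i v : Fin (n + 2) → ℤ))
      have hFc : ∀ i, (F i).card ≤ (S (m - i.natAbs)).card := fun i => Finset.card_image_le
      refine ⟨F m ∪ F (-m) ∪ (Finset.Ioo (-(m : ℤ)) m).biUnion F, ?_, by omega, ?_⟩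
      · intro k hk
        rw [Fin.sum_univ_succ] at hk
        have hmem : k ∈ F (k 0) := by
          refine Finset.mem_image.2 ⟨fun j => k j.succ, hS _ _ (by omega), ?_⟩
          exact Fin.cons_self_tail k
        have hcases : k 0 = m ∨ k 0 = -(m : ℤ) ∨ (-(m : ℤ) < k 0 ∧ k 0 < m) := by omega
        simp only [Finset.mem_union, Finset.mem_biUnion, Finset.mem_Ioo]
        rcases hcases with h | h | h
        · exact Or.inl (Or.inl (h ▸ hmem))
        · exact Or.inl (Or.inr (h ▸ hmem))
        · exact Or.inr ⟨k 0, h, hmem⟩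
      · intro _
        have hA : (F m).card ≤ 1 := (hFc _).trans (h0 _ (by omega))
        have hB : (F (-m)).card ≤ 1 := (hFc _).trans (h0 _ (by omega))
        have hC : ((Finset.Ioo (-(m : ℤ)) m).biUnion F).card
            ≤ (2 * m - 1) * (2 ^ (n + 1) * m ^ n) := by
          have hcard : (Finset.Ioo (-(m : ℤ)) m).card = 2 * m - 1 := by
            rw [Int.card_Ioo]
            omega
          rw [← hcard]
          refine Finset.card_biUnion_le_card_mul _ _ _ fun i hi => ?_
          rw [Finset.mem_Ioo] at hi
          refine (hFc i).trans ((h1 _ (by omega)).trans ?_)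
          gcongr
          omega
        have hD : 2 ≤ 2 ^ (n + 1) * m ^ n := by
          have h2 : 2 ^ 1 ≤ 2 ^ (n + 1) := Nat.pow_le_pow_right (by norm_num) (by omega)
          have h3 : 1 ≤ m ^ n := Nat.one_le_pow _ _ hm
          nlinarith
        have hE : (2 * m - 1) * (2 ^ (n + 1) * m ^ n) + 2 ^ (n + 1) * m ^ n
            = 2 ^ (n + 1 + 1) * m ^ (n + 1) := by
          obtain ⟨p, rfl⟩ : ∃ p, m = p + 1 := ⟨m - 1, by omega⟩
          have : 2 * (p + 1) - 1 = 2 * p + 1 := by omega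
          rw [this]
          ring
        have hU1 := Finset.card_union_le (F m ∪ F (-m)) ((Finset.Ioo (-(m : ℤ)) m).biUnion F)
        have hU2 := Finset.card_union_le (F m) (F (-m))
        omega

theorem card_l1_shell_le (n K r : ℕ) :
    Nat.card {k : Fin (n + 1) → ℤ //
        r * K < (∑ j, (k j).natAbs) ∧ (∑ j, (k j).natAbs) ≤ (r + 1) * K}
      ≤ K * (2 ^ (n + 1) * ((r + 1) * K) ^ n) := by
  classical
  choose S hS _ h1 using exists_cover_l1_sphere n
  have hsub : {k : Fin (n + 1) → ℤ |
      r * K < (∑ j, (k j).natAbs) ∧ (∑ j, (k j).natAbs) ≤ (r + 1) * K}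
      ⊆ ((Finset.Ioc (r * K) ((r + 1) * K)).biUnion S : Finset _) := by
    intro k hk
    simp only [Finset.coe_biUnion, Set.mem_iUnion]
    exact ⟨_, by simpa using hk, hS _ k rfl⟩
  have hle := Set.ncard_le_ncard hsub (Finset.finite_toSet _)
  rw [Set.ncard_coe_finset] at hle
  refine hle.trans ?_
  have hcard : (Finset.Ioc (r * K) ((r + 1) * K)).card = K := by
    rw [Nat.card_Ioc, Nat.succ_mul, Nat.add_sub_cancel_left]
  conv_rhs => rw [← hcard]
  refine (Finset.card_biUnion_le_card_mul _ _ (2 ^ (n + 1) * ((r + 1) * K) ^ n)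
    fun m hm => ?_).trans (by rw [hcard])
  rw [Finset.mem_Ioc] at hm
  refine (h1 m (by omega)).trans ?_
  gcongr
  exact hm.2

/-- Let `n₁ ≥ 1`, `n₂ ≥ 0`, `K ≥ 1` be integers, `τ > n₁` real, and
`γ, D, Θ₀ > 0`.  For `r ≥ 1` set `N_r = card{k ∈ ℤ^{n₁} : rK < ‖k‖₁ ≤ (r+1)K}` and
`c_{n₂} = (n₂+1)(2n₂+1)`.  Then the series `Σ_{r=1}^∞ N_r c_{n₂} 8γD^{n₁−1}/(Θ₀((r+1)K)^τ)`
converges and is bounded above by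
`γ 2^{n₁+3} c_{n₂} D^{n₁−1}/(Θ₀ K^{τ−n₁}) · Σ_{r=2}^∞ r^{−(τ−n₁+1)}`, the latter series
being convergent. -/
theorem stmt_16 (n₁ n₂ K : ℕ) (hn₁ : 1 ≤ n₁) (hK : 1 ≤ K)
    (τ γ D Θ₀ : ℝ) (hτ : (n₁ : ℝ) < τ) (hγ : 0 < γ) (hD : 0 < D) (hΘ : 0 < Θ₀)
    (N : ℕ → ℕ)
    (hN : ∀ r : ℕ, N r = Nat.card {k : Fin n₁ → ℤ //
        r * K < (∑ j, (k j).natAbs) ∧ (∑ j, (k j).natAbs) ≤ (r + 1) * K})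
    (c : ℕ) (hc : c = (n₂ + 1) * (2 * n₂ + 1))
    (f : ℕ → ℝ)
    (hf : ∀ r : ℕ, f r = (N r : ℝ) * (c : ℝ) * (8 * γ * D ^ (n₁ - 1)) /
      (Θ₀ * ((((r : ℝ) + 1) * (K : ℝ)) ^ τ))) :
    Summable (fun r : ℕ => f (r + 1)) ∧
    Summable (fun r : ℕ => ((r : ℝ) + 2) ^ (-(τ - (n₁ : ℝ) + 1))) ∧
    (∑' r : ℕ, f (r + 1)) ≤
      γ * 2 ^ (n₁ + 3) * (c : ℝ) * D ^ (n₁ - 1) / (Θ₀ * (K : ℝ) ^ (τ - (n₁ : ℝ))) *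
        ∑' r : ℕ, ((r : ℝ) + 2) ^ (-(τ - (n₁ : ℝ) + 1)) := by
  have hsum : Summable (fun r : ℕ => ((r : ℝ) + 2) ^ (-(τ - (n₁ : ℝ) + 1))) := by
    have h := (Real.summable_nat_rpow (p := -(τ - (n₁ : ℝ) + 1))).2 (by linarith)
    simpa using (summable_nat_add_iff 2).2 h
  have hfnn : ∀ r, 0 ≤ f (r + 1) := fun r => by
    rw [hf]
    positivity
  have hle : ∀ r : ℕ, f (r + 1) ≤
      γ * 2 ^ (n₁ + 3) * (c : ℝ) * D ^ (n₁ - 1) / (Θ₀ * (K : ℝ) ^ (τ - (n₁ : ℝ))) *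
        ((r : ℝ) + 2) ^ (-(τ - (n₁ : ℝ) + 1)) := by
    intro r
    obtain ⟨n, rfl⟩ : ∃ n, n₁ = n + 1 := ⟨n₁ - 1, by omega⟩
    have hNr : (N (r + 1) : ℝ) ≤ K * (2 ^ (n + 1) * (((r : ℝ) + 2) * K) ^ n) := by
      have h : N (r + 1) ≤ K * (2 ^ (n + 1) * ((r + 2) * K) ^ n) := by
        rw [hN]
        exact card_l1_shell_le n K (r + 1)
      exact_mod_cast h
    have hK0 : (0 : ℝ) < K := by exact_mod_cast hK
    have hr0 : (0 : ℝ) < (r : ℝ) + 2 := by positivity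
    rw [hf]
    have hr : ((r + 1 : ℕ) : ℝ) + 1 = (r : ℝ) + 2 := by
      push_cast
      ring
    have e1 : (K : ℝ) ^ (τ - ((n + 1 : ℕ) : ℝ)) = (K : ℝ) ^ τ / (K : ℝ) ^ (n + 1) :=
      Real.rpow_sub_natCast hK0.ne' _ _
    have e2 : ((r : ℝ) + 2) ^ (-(τ - ((n + 1 : ℕ) : ℝ) + 1))
        = ((r : ℝ) + 2) ^ n / ((r : ℝ) + 2) ^ τ := by
      rw [show -(τ - ((n + 1 : ℕ) : ℝ) + 1) = (n : ℝ) - τ by push_cast; ring,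
        Real.rpow_sub hr0, Real.rpow_natCast]
    rw [hr, e1, e2, Real.mul_rpow hr0.le hK0.le]
    have hKτ : 0 < (K : ℝ) ^ τ := Real.rpow_pos_of_pos hK0 _
    have hrτ : 0 < ((r : ℝ) + 2) ^ τ := Real.rpow_pos_of_pos hr0 _
    calc (N (r + 1) : ℝ) * c * (8 * γ * D ^ (n + 1 - 1)) /
          (Θ₀ * (((r : ℝ) + 2) ^ τ * (K : ℝ) ^ τ))
        ≤ (K * (2 ^ (n + 1) * (((r : ℝ) + 2) * K) ^ n)) * c * (8 * γ * D ^ (n + 1 - 1)) /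
          (Θ₀ * (((r : ℝ) + 2) ^ τ * (K : ℝ) ^ τ)) := by gcongr
      _ = _ := by
        rw [mul_pow]
        field_simp
        ring
  have hsum' := hsum.mul_left
    (γ * 2 ^ (n₁ + 3) * (c : ℝ) * D ^ (n₁ - 1) / (Θ₀ * (K : ℝ) ^ (τ - (n₁ : ℝ))))
  have hfs := Summable.of_nonneg_of_le hfnn hle hsum'
  refine ⟨hfs, hsum, ?_⟩
  rw [← tsum_mul_left]
  exact hfs.tsum_le_tsum hle hsum'
end
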